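/- Quadruple sine integral, deficit regime (used in the weak formulation of the 1↔3 operator, Lemma 3.3): For all real numbers a, b, c, d with 0 < a ≤ b ≤ c ≤ d and b + c − a ≤ d ≤ a + b + c, the function s ↦ sin(a s) sin(b s) sin(c s) sin(d s)/s² is absolutely integrable on (0,∞) and ∫₀^∞ sin(a s) sin(b s) sin(c s) sin(d s)/s² ds = (π/8)·(a + b + c − d). -/

import Mathlib

open Real MeasureTheory Set Filter Topology

/-- The exponential factor with positive rate kills a bounded function at infinity. -/
lemma tendsto_exp_neg_mul_mul_of_bounded {x : ℝ} (hx : 0 < x) {g : ℝ → ℝ} {C : ℝ}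
    (hg : ∀ s, |g s| ≤ C) :
    Tendsto (fun s : ℝ => Real.exp (-(x * s)) * g s) atTop (𝓝 0) := by
  have hexp : Tendsto (fun s : ℝ => Real.exp (-(x * s))) atTop (𝓝 0) :=
    Real.tendsto_exp_neg_atTop_nhds_zero.comp (tendsto_id.const_mul_atTop hx)
  refine squeeze_zero_norm (a := fun s => Real.exp (-(x * s)) * C) (fun s => ?_) ?_
  · rw [norm_mul, Real.norm_eq_abs, Real.norm_eq_abs, abs_of_pos (Real.exp_pos _)]
    exact mul_le_mul_of_nonneg_left (hg s) (Real.exp_pos _).le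
  · simpa using hexp.mul_const C

/-- The Laplace transform of `1 - cos`, multiplied by its argument. -/
lemma integrableOn_and_integral_mul_one_sub_cos_mul_exp {x : ℝ} (hx : 0 < x) :
    IntegrableOn (fun s : ℝ => x * (1 - Real.cos s) * Real.exp (-(x * s))) (Ioi 0) ∧
    ∫ s in Ioi (0:ℝ), x * (1 - Real.cos s) * Real.exp (-(x * s)) = (1 + x ^ 2)⁻¹ := by
  have hx2 : (1 + x ^ 2) ≠ 0 := by positivity
  have hderiv : ∀ s ∈ Ici (0:ℝ), HasDerivAt
      (fun s => Real.exp (-(x * s)) * (-1 - x / (1 + x ^ 2) * (Real.sin s - x * Real.cos s)))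
      (x * (1 - Real.cos s) * Real.exp (-(x * s))) s := by
    intro s _
    have he : HasDerivAt (fun s : ℝ => Real.exp (-(x * s))) (Real.exp (-(x * s)) * -(x * 1)) s :=
      ((hasDerivAt_id s).const_mul x).neg.exp
    have hg := (((Real.hasDerivAt_sin s).sub ((Real.hasDerivAt_cos s).const_mul x)).const_mul
      (x / (1 + x ^ 2))).const_sub (-1)
    refine (he.mul hg).congr_deriv ?_
    simp only [Pi.sub_apply]
    field_simp
    ring
  have hnonneg : ∀ s ∈ Ioi (0:ℝ), 0 ≤ x * (1 - Real.cos s) * Real.exp (-(x * s)) := fun s _ =>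
    mul_nonneg (mul_nonneg hx.le (sub_nonneg.2 (Real.cos_le_one s))) (Real.exp_pos _).le
  have hlim := tendsto_exp_neg_mul_mul_of_bounded hx
    (g := fun s => -1 - x / (1 + x ^ 2) * (Real.sin s - x * Real.cos s))
    (C := 1 + x / (1 + x ^ 2) * (1 + x)) (fun s => by
      have hk : 0 ≤ x / (1 + x ^ 2) := by positivity
      have h1 : |Real.sin s - x * Real.cos s| ≤ 1 + x := by
        refine (abs_sub _ _).trans (add_le_add (Real.abs_sin_le_one s) ?_)
        rw [abs_mul, abs_of_pos hx]
        exact mul_le_of_le_one_right hx.le (Real.abs_cos_le_one s)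
      refine (abs_sub _ _).trans (add_le_add (by simp) ?_)
      rw [abs_mul, abs_of_nonneg hk]
      exact mul_le_mul_of_nonneg_left h1 hk)
  refine ⟨integrableOn_Ioi_deriv_of_nonneg' hderiv hnonneg hlim, ?_⟩
  rw [integral_Ioi_of_hasDerivAt_of_nonneg' hderiv hnonneg hlim]
  simp
  field_simp
  ring

lemma integral_one_sub_cos_mul_exp {s : ℝ} (hs : 0 < s) :
    ∫ x in Ioi (0:ℝ), x * (1 - Real.cos s) * Real.exp (-(x * s)) = (1 - Real.cos s) / s ^ 2 := by
  have h := Real.integral_rpow_mul_exp_neg_mul_Ioi (a := 2) (by norm_num) hs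
  have hΓ : Real.Gamma 2 = 1 := Real.Gamma_two
  rw [hΓ, mul_one, show (2:ℝ) - 1 = 1 by norm_num] at h
  simp only [Real.rpow_one, Real.rpow_two] at h
  calc _ = ∫ x in Ioi (0:ℝ), (1 - Real.cos s) * (x * Real.exp (-(s * x))) := by
        congr 1 with x
        rw [mul_comm x s]
        ring
    _ = _ := by
        rw [integral_const_mul, h]
        ring

lemma integrableOn_and_integral_one_sub_cos_div_sq :
    IntegrableOn (fun s : ℝ => (1 - Real.cos s) / s ^ 2) (Ioi 0) ∧
    ∫ s in Ioi (0:ℝ), (1 - Real.cos s) / s ^ 2 = π / 2 := by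
  have hint : Integrable
      (Function.uncurry fun x s : ℝ => x * (1 - Real.cos s) * Real.exp (-(x * s)))
      ((volume.restrict (Ioi 0)).prod (volume.restrict (Ioi 0))) := by
    have hcont : Continuous
        (Function.uncurry fun x s : ℝ => x * (1 - Real.cos s) * Real.exp (-(x * s))) := by
      unfold Function.uncurry
      fun_prop
    rw [integrable_prod_iff hcont.aestronglyMeasurable]
    refine ⟨?_, ?_⟩
    · filter_upwards [ae_restrict_mem measurableSet_Ioi] with x hx
      exact (integrableOn_and_integral_mul_one_sub_cos_mul_exp hx).1
    · refine (integrable_inv_one_add_sq.integrableOn (s := Ioi 0)).congr ?_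
      filter_upwards [ae_restrict_mem measurableSet_Ioi] with x hx
      rw [← (integrableOn_and_integral_mul_one_sub_cos_mul_exp hx).2]
      refine integral_congr_ae (Eventually.of_forall fun s => ?_)
      exact (Real.norm_of_nonneg (mul_nonneg (mul_nonneg (le_of_lt hx)
        (sub_nonneg.2 (Real.cos_le_one s))) (Real.exp_pos _).le)).symm
  have heq : (fun s : ℝ => ∫ x in Ioi (0:ℝ), x * (1 - Real.cos s) * Real.exp (-(x * s)))
      =ᵐ[volume.restrict (Ioi 0)] fun s => (1 - Real.cos s) / s ^ 2 := by
    filter_upwards [ae_restrict_mem measurableSet_Ioi] with s hs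
    exact integral_one_sub_cos_mul_exp hs
  refine ⟨hint.integral_prod_right.congr heq, ?_⟩
  rw [← integral_congr_ae heq, ← integral_integral_swap hint,
    setIntegral_congr_fun measurableSet_Ioi fun x hx =>
      (integrableOn_and_integral_mul_one_sub_cos_mul_exp hx).2,
    integral_Ioi_inv_one_add_sq]
  simp

lemma integrableOn_and_integral_one_sub_cos_mul_div_sq (t : ℝ) :
    IntegrableOn (fun s : ℝ => (1 - Real.cos (t * s)) / s ^ 2) (Ioi 0) ∧
    ∫ s in Ioi (0:ℝ), (1 - Real.cos (t * s)) / s ^ 2 = π / 2 * |t| := by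
  obtain rfl | ht := eq_or_ne t 0
  · simp
  have hpos : 0 < |t| := abs_pos.2 ht
  have hfun : (fun s : ℝ => (1 - Real.cos (t * s)) / s ^ 2) =
      fun s => |t| ^ 2 * ((1 - Real.cos (|t| * s)) / (|t| * s) ^ 2) := by
    funext s
    have hcos : Real.cos (|t| * s) = Real.cos (t * s) := by
      rcases abs_choice t with h | h <;> simp [h]
    rw [hcos, mul_pow]
    field_simp
  obtain ⟨hi, hv⟩ := integrableOn_and_integral_one_sub_cos_div_sq
  rw [hfun]
  refine ⟨?_, ?_⟩
  · have h := (integrableOn_Ioi_comp_mul_left_iff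
      (fun s : ℝ => (1 - Real.cos s) / s ^ 2) 0 hpos).2 (by simpa using hi)
    exact h.const_mul _
  · rw [integral_const_mul,
      integral_comp_mul_left_Ioi (fun s : ℝ => (1 - Real.cos s) / s ^ 2) 0 hpos, mul_zero, hv,
      smul_eq_mul]
    field_simp

lemma eight_mul_sin_mul_sin_mul_sin_mul_sin (a b c d : ℝ) :
    8 * (Real.sin a * Real.sin b * Real.sin c * Real.sin d) =
      Real.cos (a - b + c - d) + Real.cos (a - b - c + d) - Real.cos (a - b + c + d)
      - Real.cos (a - b - c - d) - Real.cos (a + b + c - d) - Real.cos (a + b - c + d)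
      + Real.cos (a + b + c + d) + Real.cos (a + b - c - d) := by
  simp only [Real.cos_add, Real.cos_sub, Real.sin_add, Real.sin_sub]
  ring

/-- **Quadruple sine integral, deficit regime** (Lemma 3.3): for `0 < a ≤ b ≤ c ≤ d` with
`b + c − a ≤ d ≤ a + b + c`, the function `s ↦ sin(as) sin(bs) sin(cs) sin(ds)/s²` is
absolutely integrable on `(0,∞)` and its integral equals `(π/8)·(a + b + c − d)`. -/
theorem quadruple_sine_integral_deficit (a b c d : ℝ) (ha : 0 < a)
    (hab : a ≤ b) (hbc : b ≤ c) (hcd : c ≤ d)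
    (hlo : b + c - a ≤ d) (hhi : d ≤ a + b + c) :
    IntegrableOn
      (fun s : ℝ => Real.sin (a*s) * Real.sin (b*s) * Real.sin (c*s) * Real.sin (d*s) / s^2)
      (Set.Ioi 0) ∧
    ∫ s in Set.Ioi (0:ℝ),
        Real.sin (a*s) * Real.sin (b*s) * Real.sin (c*s) * Real.sin (d*s) / s^2
      = Real.pi / 8 * (a + b + c - d) := by
  let J : ℝ → ℝ → ℝ := fun t s => (1 - Real.cos (t * s)) / s ^ 2
  have hJ : ∀ t, IntegrableOn (J t) (Ioi 0) := fun t =>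
    (integrableOn_and_integral_one_sub_cos_mul_div_sq t).1
  have hJv : ∀ t, ∫ s in Ioi (0:ℝ), J t s = π / 2 * |t| := fun t =>
    (integrableOn_and_integral_one_sub_cos_mul_div_sq t).2
  let ε : Fin 8 → ℝ := ![-1, -1, 1, 1, 1, 1, -1, -1]
  let ω : Fin 8 → ℝ := ![a - b + c - d, a - b - c + d, a - b + c + d, a - b - c - d,
    a + b + c - d, a + b - c + d, a + b + c + d, a + b - c - d]
  have hfun : (fun s : ℝ =>
      Real.sin (a*s) * Real.sin (b*s) * Real.sin (c*s) * Real.sin (d*s) / s^2) =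
      fun s => ∑ i, ε i / 8 * J (ω i) s := by
    funext s
    have h := eight_mul_sin_mul_sin_mul_sin_mul_sin (a*s) (b*s) (c*s) (d*s)
    simp only [← add_mul, ← sub_mul] at h
    rw [eq_div_of_mul_eq (by norm_num) ((mul_comm _ _).trans h)]
    simp [Fin.sum_univ_eight, ε, ω, J]
    ring
  have hterm : ∀ i ∈ Finset.univ,
      Integrable (fun s => ε i / 8 * J (ω i) s) (volume.restrict (Ioi 0)) :=
    fun i _ => (hJ (ω i)).const_mul _
  rw [hfun]
  refine ⟨integrable_finsetSum _ hterm, ?_⟩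
  rw [integral_finsetSum _ hterm]
  simp only [integral_const_mul, hJv]
  simp only [Fin.sum_univ_eight, ε, ω]
  simp
  rw [abs_of_nonpos (show a - b + c - d ≤ 0 by linarith),
    abs_of_nonneg (show 0 ≤ a - b - c + d by linarith),
    abs_of_nonneg (show 0 ≤ a - b + c + d by linarith),
    abs_of_nonpos (show a - b - c - d ≤ 0 by linarith),
    abs_of_nonneg (show 0 ≤ a + b + c - d by linarith),
    abs_of_nonneg (show 0 ≤ a + b - c + d by linarith),
    abs_of_nonneg (show 0 ≤ a + b + c + d by linarith),
    abs_of_nonpos (show a + b - c - d ≤ 0 by linarith)]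
  ring
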